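/- Let p be a prime, m ≥ 1, s ≥ 2, η a positive integer coprime to p, λ_0 a nonzero element of F_{p^m} such that x^η − λ_0 is irreducible over F_{p^m}, and let 1 ≤ i ≤ p^{s−1} − 1. If the code C_i(η, p^s, λ_0) is an optimal LRC, then either i = p^{s−k−1} for some 1 ≤ k ≤ s − 1, or else i = 2, η = 1 and p is odd. -/

import Mathlib

open Polynomial

variable {F : Type} [Field F] [Fintype F] [DecidableEq F]

/-- `d` is the minimum distance (minimum Hamming weight of a nonzero codeword) of `Cset`. -/
def minDistIs {n : ℕ} (Cset : Set (Fin n → F)) (d : ℕ) : Prop :=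
  IsLeast {w : ℕ | ∃ c ∈ Cset, c ≠ 0 ∧ hammingNorm c = w} d

/-- The `i`-th code symbol of `Cset` has locality `r`. -/
def symbolLocality {n : ℕ} (Cset : Set (Fin n → F)) (i : Fin n) (r : ℕ) : Prop :=
  ∃ I : Finset (Fin n), i ∉ I ∧ I.card ≤ r ∧
    ∃ f : ({x : Fin n // x ∈ I} → F) → F, ∀ c ∈ Cset, c i = f (fun j => c j.1)

/-- `Cset` has all-symbol locality `r`. -/
def hasAllSymbolLocality {n : ℕ} (Cset : Set (Fin n → F)) (r : ℕ) : Prop :=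
  ∀ i : Fin n, symbolLocality Cset i r

/-- `r` is the minimum locality of `Cset`. -/
def minLocalityIs {n : ℕ} (Cset : Set (Fin n → F)) (r : ℕ) : Prop :=
  IsLeast {r' : ℕ | hasAllSymbolLocality Cset r'} r

/-- The λ-constacyclic code of length `n` corresponding to the ideal generated by (the image of)
`g` in `F[x]/⟨x^n − λ⟩`, viewed as a set of vectors via the coefficient identification. -/
def codeOfGen (n : ℕ) (lam : F) (g : F[X]) : Set (Fin n → F) :=
  {c | (∑ j : Fin n, Polynomial.C (c j) * X ^ (j : ℕ)) ∈ Ideal.span {g, X ^ n - Polynomial.C lam}}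

/-- The code `C_i(η, p^s, λ₀)`: the λ-constacyclic code of length `η p^s`
generated by `(x^η − λ₀)^i`, where `λ = λ₀^{p^s}`. -/
def Ci (p η s i : ℕ) (lam0 : F) : Set (Fin (η * p ^ s) → F) :=
  codeOfGen (η * p ^ s) (lam0 ^ p ^ s) ((X ^ η - Polynomial.C lam0) ^ i)

/-- The code `C_{i,j}(2p^s, λ₀)` with `λ₀ = δ²`: the λ-constacyclic code of length `2 p^s`
generated by `(x − δ)^i (x + δ)^j`, where `λ = λ₀^{p^s}`. -/
def Cij (p s i j : ℕ) (δ : F) : Set (Fin (2 * p ^ s) → F) :=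
  codeOfGen (2 * p ^ s) ((δ ^ 2) ^ p ^ s) ((X - Polynomial.C δ) ^ i * (X + Polynomial.C δ) ^ j)

/-- `V_t = Π_j (t_j + 1)` over the base-`p` digits `t_j` of `t`. -/
def Vdig (p t : ℕ) : ℕ := ((Nat.digits p t).map (· + 1)).prod

/-- Ceiling division `⌈a / b⌉` of natural numbers. -/
def nceil (a b : ℕ) : ℕ := (a + b - 1) / b

/-- `Cset` is an optimal LRC: for its dimension `k`, minimum distance `d` and minimum
locality `r`, the Singleton-like bound `d = n − k − ⌈k/r⌉ + 2` is met with equality. -/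
def optimalLRC {n : ℕ} (Cset : Set (Fin n → F)) : Prop :=
  ∃ k d r : ℕ, Nat.card Cset = Fintype.card F ^ k ∧ minDistIs Cset d ∧
    minLocalityIs Cset r ∧ (d : ℤ) = (n : ℤ) - (k : ℤ) - (nceil k r : ℤ) + 2

/-!
The code contains the word `(X ^ η - C λ₀) ^ p ^ (s - 1)` of weight two, so its minimum distance is
at most `2` and an optimal code needs locality `r` with `η * i * (r + 1) < η * p ^ s + (r + 1)`.

Conversely, locality `r` forces a dual word of weight at most `r + 1` that does not vanish at the
last position. Its reversal is a multiple of the check polynomial `(X ^ η - C λ₀) ^ (p ^ s - i)`,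
and keeping only the exponents divisible by `η` leaves a nonzero polynomial `f` of degree less than
`p ^ s`, with at most `r + 1` terms, in which `λ₀` is a root of some multiplicity `t ≥ p ^ s - i`.
By Massey's weight inequality `f` has at least as many terms as `(X + 1) ^ t`, which by Lucas'
theorem has `Vdig p t` terms. Estimating `Vdig p t` through the leading base-`p` digit of `i` and
comparing with the bound on `r` leaves only the two listed possibilities for `i`.
-/

section SupportOfRepeatedRoots

variable {R : Type*} [CommRing R]

theorem taylor_hasseDeriv (μ : R) (l : ℕ) (f : R[X]) :
    taylor μ (hasseDeriv l f) = hasseDeriv l (taylor μ f) := by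
  ext n
  have hcomp := congrArg (eval μ) (LinearMap.congr_fun (hasseDeriv_comp (R := R) n l) f)
  rw [taylor_coeff, hasseDeriv_coeff, taylor_coeff]
  simpa [Nat.choose_symm_add] using hcomp

theorem le_of_natCast_choose_ne_zero {n l : ℕ} (h : (n.choose l : R) ≠ 0) : l ≤ n := by
  by_contra! hlt
  simp [Nat.choose_eq_zero_of_lt hlt] at h

theorem support_X_pow_mul_hasseDeriv_subset (f : R[X]) (l : ℕ) :
    (X ^ l * hasseDeriv l f).support ⊆ f.support := by
  intro n hn
  rw [mem_support_iff, coeff_X_pow_mul'] at hn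
  split_ifs at hn with hln
  · rw [hasseDeriv_coeff, Nat.sub_add_cancel hln] at hn
    exact mem_support_iff.mpr (right_ne_zero_of_mul hn)
  · exact absurd rfl hn

theorem card_le_of_linearIndependent_of_support_subset [Nontrivial R] {ι : Type*} [Fintype ι]
    {f : ι → R[X]} (hf : LinearIndependent R f) {S : Finset ℕ} (hS : ∀ i, (f i).support ⊆ S) :
    Fintype.card ι ≤ S.card := by
  classical
  have hspan : Set.range f ⊆
      Submodule.span R ((S.image fun n => X ^ n : Finset R[X]) : Set R[X]) := by
    rintro _ ⟨i, rfl⟩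
    rw [(f i).as_sum_support_C_mul_X_pow]
    refine sum_mem fun n hn => ?_
    rw [← smul_eq_C_mul]
    exact Submodule.smul_mem _ _ (Submodule.subset_span (Finset.mem_image_of_mem _ (hS i hn)))
  have hcard := linearIndependent_le_span' f hf _ hspan
  simp only [Cardinal.mk_fintype, Nat.cast_le, Fintype.card_coe, Finset.coe_sort_coe] at hcard
  exact hcard.trans Finset.card_image_le

variable [IsDomain R]

theorem coeff_hasseDeriv_natTrailingDegree_sub_ne_zero {f : R[X]} (hf : f ≠ 0) {l : ℕ}
    (hchoose : (f.natTrailingDegree.choose l : R) ≠ 0) :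
    (hasseDeriv l f).coeff (f.natTrailingDegree - l) ≠ 0 := by
  rw [hasseDeriv_coeff, Nat.sub_add_cancel (le_of_natCast_choose_ne_zero hchoose)]
  exact mul_ne_zero hchoose (trailingCoeff_nonzero_iff_nonzero.mpr hf)

theorem natTrailingDegree_hasseDeriv {f : R[X]} (hf : f ≠ 0) {l : ℕ}
    (hchoose : (f.natTrailingDegree.choose l : R) ≠ 0) :
    (hasseDeriv l f).natTrailingDegree = f.natTrailingDegree - l := by
  have hcoeff := coeff_hasseDeriv_natTrailingDegree_sub_ne_zero hf hchoose
  refine le_antisymm (natTrailingDegree_le_of_ne_zero hcoeff) ?_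
  refine le_natTrailingDegree (fun h => hcoeff (by simp [h])) fun n hn => ?_
  rw [hasseDeriv_coeff, coeff_eq_zero_of_lt_natTrailingDegree (by omega), mul_zero]

theorem hasseDeriv_ne_zero {f : R[X]} (hf : f ≠ 0) {μ : R} {l : ℕ}
    (hchoose : ((f.rootMultiplicity μ).choose l : R) ≠ 0) : hasseDeriv l f ≠ 0 := by
  rw [rootMultiplicity_eq_natTrailingDegree, ← taylor_apply] at hchoose
  intro hzero
  apply coeff_hasseDeriv_natTrailingDegree_sub_ne_zero ((taylor_eq_zero μ f).not.mpr hf) hchoose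
  rw [← taylor_hasseDeriv, hzero, map_zero, coeff_zero]

theorem rootMultiplicity_hasseDeriv {f : R[X]} (hf : f ≠ 0) {μ : R} {l : ℕ}
    (hchoose : ((f.rootMultiplicity μ).choose l : R) ≠ 0) :
    (hasseDeriv l f).rootMultiplicity μ = f.rootMultiplicity μ - l := by
  simp only [rootMultiplicity_eq_natTrailingDegree, ← taylor_apply] at hchoose ⊢
  rw [taylor_hasseDeriv, natTrailingDegree_hasseDeriv ((taylor_eq_zero μ f).not.mpr hf) hchoose]

theorem linearIndependent_of_rootMultiplicity_injective {ι : Type*} {f : ι → R[X]} (μ : R)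
    (hf : ∀ i, f i ≠ 0) (hinj : Function.Injective fun i => (f i).rootMultiplicity μ) :
    LinearIndependent R f := by
  classical
  rw [linearIndependent_iff']
  intro t c hsum
  by_contra! hc
  obtain ⟨i, hi, hmin⟩ := Finset.exists_min_image {i ∈ t | c i ≠ 0}
    (fun i => (f i).rootMultiplicity μ) (by simpa [Finset.Nonempty] using hc)
  simp only [Finset.mem_filter] at hi hmin
  have hdvd_others : ∀ j ∈ t.erase i, (X - C μ) ^ ((f i).rootMultiplicity μ + 1) ∣ c j • f j := by
    intro j hj
    obtain ⟨hji, hjt⟩ := Finset.mem_erase.mp hj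
    by_cases hcj : c j = 0
    · simp [hcj]
    · have hlt := (hmin j ⟨hjt, hcj⟩).lt_of_ne (hinj.ne hji.symm)
      exact dvd_smul_of_dvd _ ((le_rootMultiplicity_iff (hf j)).mp hlt)
  have hdvd : (X - C μ) ^ ((f i).rootMultiplicity μ + 1) ∣ c i • f i := by
    rw [eq_neg_of_add_eq_zero_left ((Finset.add_sum_erase t _ hi.1).trans hsum)]
    exact (Finset.dvd_sum hdvd_others).neg_right
  have hci : C (c i) * f i ≠ 0 := mul_ne_zero (C_ne_zero.mpr hi.2) (hf i)
  rw [smul_eq_C_mul, ← le_rootMultiplicity_iff hci, rootMultiplicity_mul hci,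
    rootMultiplicity_C] at hdvd
  omega

/-- The polynomials `X ^ l * hasseDeriv l f` are supported in `f.support`, and those with
`(t.choose l : R) ≠ 0`, where `t` is the multiplicity of `μ`, have pairwise distinct multiplicities
`t - l` at `μ`. -/
theorem card_support_X_add_one_pow_rootMultiplicity_le {f : R[X]} (hf : f ≠ 0) {μ : R}
    (hμ : μ ≠ 0) :
    ((X + 1 : R[X]) ^ f.rootMultiplicity μ).support.card ≤ f.support.card := by
  set t := f.rootMultiplicity μ
  let D (l : ((X + 1 : R[X]) ^ t).support) : R[X] := X ^ (l : ℕ) * hasseDeriv l f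
  have hchoose (l : ((X + 1 : R[X]) ^ t).support) : (t.choose l : R) ≠ 0 := by
    rw [← coeff_X_add_one_pow]
    exact mem_support_iff.mp l.2
  have hD0 (l) : D l ≠ 0 :=
    mul_ne_zero (pow_ne_zero _ X_ne_zero) (hasseDeriv_ne_zero hf (hchoose l))
  have hDmult (l) : (D l).rootMultiplicity μ = t - l := by
    have hX : (X ^ (l : ℕ) : R[X]).rootMultiplicity μ = 0 :=
      rootMultiplicity_eq_zero (by simp [hμ])
    rw [rootMultiplicity_mul (hD0 l), hX, rootMultiplicity_hasseDeriv hf (hchoose l), zero_add]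
  have hDinj : Function.Injective fun l => (D l).rootMultiplicity μ := by
    intro l l' h
    have hl := le_of_natCast_choose_ne_zero (hchoose l)
    have hl' := le_of_natCast_choose_ne_zero (hchoose l')
    simp only [hDmult] at h
    exact Subtype.ext (by omega)
  have hindep := linearIndependent_of_rootMultiplicity_injective μ hD0 hDinj
  simpa only [Fintype.card_coe] using card_le_of_linearIndependent_of_support_subset hindep
    fun l => support_X_pow_mul_hasseDeriv_subset f l

end SupportOfRepeatedRoots

section DigitProduct

variable {p : ℕ}

theorem Vdig_eq_mod_succ_mul_Vdig_div (hp : 1 < p) (t : ℕ) :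
    Vdig p t = (t % p + 1) * Vdig p (t / p) := by
  rcases t.eq_zero_or_pos with rfl | ht
  · simp [Vdig]
  · simp [Vdig, Nat.digits_def' hp ht]

theorem Vdig_of_lt (hp : 1 < p) {t : ℕ} (ht : t < p) : Vdig p t = t + 1 := by
  rw [Vdig_eq_mod_succ_mul_Vdig_div hp, Nat.mod_eq_of_lt ht, Nat.div_eq_of_lt ht]
  simp [Vdig]

theorem Vdig_pos (p t : ℕ) : 0 < Vdig p t :=
  Nat.pos_of_ne_zero (by simp [Vdig, List.prod_eq_zero_iff])

theorem two_le_Vdig (hp : 1 < p) {t : ℕ} (ht : t ≠ 0) : 2 ≤ Vdig p t := by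
  induction t using Nat.strong_induction_on with
  | _ t ih =>
    rw [Vdig_eq_mod_succ_mul_Vdig_div hp]
    by_cases hdiv : t / p = 0
    · have hlt : t < p := (Nat.div_eq_zero_iff_lt (by omega)).mp hdiv
      rw [Nat.mod_eq_of_lt hlt]
      exact (show 2 ≤ t + 1 by omega).trans (Nat.le_mul_of_pos_right _ (Vdig_pos _ _))
    · exact (ih _ (Nat.div_lt_self (by omega) hp) hdiv).trans
        (Nat.le_mul_of_pos_left _ (Nat.succ_pos _))

theorem Vdig_eq_Vdig_div_mul_Vdig_mod (hp : 1 < p) (e t : ℕ) :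
    Vdig p t = Vdig p (t / p ^ e) * Vdig p (t % p ^ e) := by
  induction e generalizing t with
  | zero => simp [Nat.mod_one, Vdig]
  | succ e ih =>
    rw [Vdig_eq_mod_succ_mul_Vdig_div hp t, ih (t / p),
      Vdig_eq_mod_succ_mul_Vdig_div hp (t % p ^ (e + 1)), pow_succ' p e,
      Nat.mod_mul_right_mod, Nat.mod_mul_right_div_self, Nat.div_div_eq_div_mul]
    ring

theorem Vdig_pow_succ_sub (hp : 1 < p) (w : ℕ) {j : ℕ} (hj : 1 ≤ j) (hjp : j ≤ p) :
    Vdig p (p ^ (w + 1) - j) = (p - j + 1) * p ^ w := by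
  induction w generalizing j with
  | zero => rw [zero_add, pow_one, Vdig_of_lt hp (by omega), pow_zero, mul_one]
  | succ w ih =>
    have hle : p ≤ p * p ^ (w + 1) := Nat.le_mul_of_pos_right p (by positivity)
    have hsplit : p ^ (w + 1 + 1) - j = (p - j) + p * (p ^ (w + 1) - 1) := by
      rw [pow_succ' p (w + 1), Nat.mul_sub, mul_one]
      omega
    have hlt : p - j < p := by omega
    rw [Vdig_eq_mod_succ_mul_Vdig_div hp, hsplit, Nat.add_mul_mod_self_left,
      Nat.add_mul_div_left _ _ (by omega), Nat.mod_eq_of_lt hlt, Nat.div_eq_of_lt hlt, zero_add,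
      ih le_rfl hp.le, Nat.sub_add_cancel hp.le, pow_succ']

theorem mul_pow_le_Vdig {a e w t : ℕ} (hp : 1 < p) (hap : a < p) (ht : t < p ^ (w + 1 + e))
    (hat : p ^ (w + 1 + e) < t + (a + 1) * p ^ e) : (p - a + 1) * p ^ w ≤ Vdig p t := by
  have hpe : 0 < p ^ e := by positivity
  rw [pow_add] at ht hat
  have hu : t / p ^ e < p ^ (w + 1) := Nat.div_lt_of_lt_mul (by rwa [mul_comm])
  obtain ⟨j, hj⟩ := Nat.exists_eq_add_of_le hu.le
  have hj_pos : 1 ≤ j := by omega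
  have hmod := Nat.div_add_mod t (p ^ e)
  have hmod_lt := Nat.mod_lt t hpe
  have hjmod : j * p ^ e < t % p ^ e + (a + 1) * p ^ e := by
    rw [hj] at hat
    nlinarith
  have hja : j ≤ a + 1 := by
    by_contra! h
    nlinarith
  rw [Vdig_eq_Vdig_div_mul_Vdig_mod hp e t, Nat.eq_sub_of_add_eq hj.symm,
    Vdig_pow_succ_sub hp w hj_pos (by omega)]
  rcases hja.lt_or_eq with hlt | rfl
  · calc (p - a + 1) * p ^ w ≤ (p - j + 1) * p ^ w := by gcongr; omega
      _ ≤ _ := Nat.le_mul_of_pos_right _ (Vdig_pos _ _)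
  · calc (p - a + 1) * p ^ w ≤ (p - (a + 1) + 1) * 2 * p ^ w := by gcongr; omega
      _ = (p - (a + 1) + 1) * p ^ w * 2 := by ring
      _ ≤ _ := by gcongr; exact two_le_Vdig hp (by omega)

theorem not_dvd_choose_of_lt (hp : p.Prime) {n l : ℕ} (hn : n < p) (hl : l ≤ n) :
    ¬ p ∣ n.choose l := fun h =>
  hn.not_ge <| hp.dvd_factorial.mp <|
    (h.mul_right _).mul_right _ |>.trans (Nat.choose_mul_factorial_mul_factorial hl).dvd

theorem not_dvd_choose_add_mul (hp : p.Prime) {t d l : ℕ} (hd : d ≤ t % p)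
    (hl : ¬ p ∣ (t / p).choose l) : ¬ p ∣ t.choose (d + p * l) := by
  have : Fact p.Prime := ⟨hp⟩
  have hmod : t % p < p := Nat.mod_lt t hp.pos
  have hdp : d < p := hd.trans_lt hmod
  have hlucas := Choose.choose_modEq_choose_mod_mul_choose_div_nat (p := p) (n := t)
    (k := d + p * l)
  rw [Nat.add_mul_mod_self_left, Nat.add_mul_div_left _ _ hp.pos, Nat.mod_eq_of_lt hdp,
    Nat.div_eq_of_lt hdp, zero_add] at hlucas
  rw [hlucas.dvd_iff dvd_rfl, hp.dvd_mul]
  exact not_or.mpr ⟨not_dvd_choose_of_lt hp hmod hd, hl⟩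

theorem injOn_add_mul (p : ℕ) : Set.InjOn (fun x : ℕ × ℕ => x.1 + p * x.2) {x | x.1 < p} := by
  rintro ⟨d, l⟩ hd ⟨d', l'⟩ hd' heq
  simp only [Set.mem_ofPred_eq] at hd hd' heq
  obtain rfl : d = d' := by
    simpa [Nat.mod_eq_of_lt, hd, hd'] using congrArg (· % p) heq
  exact Prod.ext rfl (Nat.eq_of_mul_eq_mul_left (Nat.zero_lt_of_lt hd) (Nat.add_left_cancel heq))

theorem mem_support_X_add_one_pow {R : Type*} [Semiring R] [CharP R p] {t l : ℕ} :
    l ∈ ((X + 1 : R[X]) ^ t).support ↔ ¬ p ∣ t.choose l := by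
  rw [mem_support_iff, coeff_X_add_one_pow, Ne, CharP.cast_eq_zero_iff R p]

theorem Vdig_le_card_support_X_add_one_pow {R : Type*} [Semiring R] [CharP R p] (hp : p.Prime)
    (t : ℕ) : Vdig p t ≤ ((X + 1 : R[X]) ^ t).support.card := by
  induction t using Nat.strong_induction_on with
  | _ t ih =>
    rcases t.eq_zero_or_pos with rfl | ht
    · have hmem : 0 ∈ ((X + 1 : R[X]) ^ 0).support := by
        rw [mem_support_X_add_one_pow (p := p), Nat.choose_self, Nat.dvd_one]
        exact hp.ne_one
      simpa [Vdig] using Finset.card_pos.mpr ⟨0, hmem⟩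
    · calc Vdig p t = (t % p + 1) * Vdig p (t / p) := Vdig_eq_mod_succ_mul_Vdig_div hp.one_lt t
        _ ≤ (t % p + 1) * ((X + 1 : R[X]) ^ (t / p)).support.card := by
          gcongr
          exact ih _ (Nat.div_lt_self ht hp.one_lt)
        _ = (Finset.range (t % p + 1) ×ˢ ((X + 1 : R[X]) ^ (t / p)).support).card := by simp
        _ ≤ ((X + 1 : R[X]) ^ t).support.card := by
          refine Finset.card_le_card_of_injOn (fun x => x.1 + p * x.2) ?_
            ((injOn_add_mul p).mono ?_)
          all_goals
            rintro ⟨d, l⟩ hx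
            simp only [Finset.coe_product, Set.mem_prod, Finset.mem_coe, Finset.mem_range_succ_iff,
              mem_support_X_add_one_pow (p := p)] at hx ⊢
          · exact not_dvd_choose_add_mul hp hx.1 hx.2
          · exact hx.1.trans_lt (Nat.mod_lt t hp.pos)

theorem Vdig_rootMultiplicity_le_card_support {R : Type*} [CommRing R] [IsDomain R] [CharP R p]
    (hp : p.Prime) {f : R[X]} (hf : f ≠ 0) {μ : R} (hμ : μ ≠ 0) :
    Vdig p (f.rootMultiplicity μ) ≤ f.support.card :=
  (Vdig_le_card_support_X_add_one_pow hp _).trans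
    (card_support_X_add_one_pow_rootMultiplicity_le hf hμ)

end DigitProduct

section ConstacyclicCodes

variable {n : ℕ}

theorem sum_C_mul_X_pow_eq_ofFn {R : Type*} [Semiring R] [DecidableEq R] (c : Fin n → R) :
    ∑ j : Fin n, C (c j) * X ^ (j : ℕ) = ofFn n c := by
  simp only [ofFn_eq_sum_monomial, C_mul_X_pow_eq_monomial]

theorem card_support_ofFn {R : Type*} [Semiring R] [DecidableEq R] (c : Fin n → R) :
    (ofFn n c).support.card = hammingNorm c := by
  symm
  refine Finset.card_bij (fun j _ => (j : ℕ)) ?_ ?_ ?_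
  · intro j hj
    simpa using hj
  · intro j _ j' _ h
    exact Fin.ext h
  · intro k hk
    rw [mem_support_iff] at hk
    have hkn : k < n := by
      by_contra! h
      exact hk (ofFn_coeff_eq_zero_of_ge c h)
    exact ⟨⟨k, hkn⟩, by simpa [hkn] using hk, rfl⟩

theorem hammingNorm_comp_rev {M : Type*} [Zero M] [DecidableEq M] {n : ℕ} (w : Fin n → M) :
    hammingNorm (w ∘ Fin.rev) = hammingNorm w :=
  Finset.card_equiv Fin.revPerm (by simp)

theorem coeff_ofFn_rev_mul_ofFn {R : Type*} [CommSemiring R] [DecidableEq R]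
    (w c : Fin n → R) :
    (ofFn n (w ∘ Fin.rev) * ofFn n c).coeff (n - 1) = w ⬝ᵥ c := by
  cases n with
  | zero => simp
  | succ m =>
    rw [mul_comm, Nat.add_sub_cancel, coeff_mul, Finset.Nat.sum_antidiagonal_eq_sum_range_succ_mk,
      Finset.sum_range, dotProduct]
    refine Finset.sum_congr rfl fun j _ => ?_
    have hrev : (⟨m - j, by omega⟩ : Fin (m + 1)).rev = j :=
      Fin.ext (by simp only [Fin.val_rev]; omega)
    rw [ofFn_coeff_eq_val_of_lt _ j.2, ofFn_coeff_eq_val_of_lt _ (by omega : m - (j : ℕ) < m + 1),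
      Function.comp_apply, hrev, mul_comm]

/-- Writing `f = h * Q + r`, the leading term of `r * g` would lie in the window `[deg g, n)`, where
neither `f * g` nor `(X ^ n - C l) * Q` has a term. -/
theorem dvd_of_coeff_mul_eq_zero {R : Type*} [CommRing R] {g h f : R[X]} {l : R}
    (hg : g.Monic) (hgh : g * h = X ^ n - C l) (hf : f.natDegree < n)
    (hcoeff : ∀ m, g.natDegree ≤ m → m < n → (f * g).coeff m = 0) : h ∣ f := by
  nontriviality R
  have hn : n ≠ 0 := by omega
  have hh : h.Monic := hg.of_mul_monic_left (hgh ▸ monic_X_pow_sub_C l hn)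
  have hgh_deg : g.natDegree + h.natDegree = n := by
    rw [← hg.natDegree_mul hh, hgh, natDegree_X_pow_sub_C]
  rw [← modByMonic_eq_zero_iff_dvd hh]
  set Q := f /ₘ h
  set r := f %ₘ h
  by_contra hr
  have hr_deg : r.natDegree < h.natDegree := natDegree_lt_natDegree hr (degree_modByMonic_lt f hh)
  have hQ_coeff : Q.coeff (r.natDegree + g.natDegree) = 0 := by
    rcases lt_or_ge f.degree h.degree with hlt | hge
    · rw [show Q = 0 from (divByMonic_eq_zero_iff hh).mpr hlt, coeff_zero]
    · have hle := natDegree_le_natDegree hge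
      have hQ_deg : Q.natDegree = f.natDegree - h.natDegree := natDegree_divByMonic f hh
      exact coeff_eq_zero_of_natDegree_lt (by omega)
  have hmul : f * g = r * g + (Q * X ^ n - C l * Q) := by
    calc f * g = (r + h * Q) * g := by rw [modByMonic_add_div f h]
      _ = r * g + (g * h) * Q := by ring
      _ = _ := by rw [hgh]; ring
  have hlead := hcoeff (r.natDegree + g.natDegree) (by omega) (by omega)
  rw [hmul, coeff_add, coeff_sub, coeff_mul_X_pow', if_neg (by omega), coeff_C_mul,
    hQ_coeff, coeff_mul_degree_add_degree, hg.leadingCoeff, mul_one, mul_zero, sub_zero, add_zero]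
    at hlead
  exact hr (leadingCoeff_eq_zero.mp hlead)

variable {K : Type} [Field K]

theorem mem_codeOfGen_iff_dvd_ofFn [DecidableEq K] {l : K} {g : K[X]} (hg : g ∣ X ^ n - C l)
    {c : Fin n → K} :
    c ∈ codeOfGen n l g ↔ g ∣ ofFn n c := by
  rw [codeOfGen, Set.mem_ofPred_eq, sum_C_mul_X_pow_eq_ofFn,
    Ideal.span_pair_eq_span_left_iff_dvd.mpr hg, Ideal.mem_span_singleton]

theorem toFn_mem_codeOfGen {l : K} {g f : K[X]} (hfn : f.natDegree < n) (hgf : g ∣ f) :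
    toFn n f ∈ codeOfGen n l g := by
  classical
  rw [codeOfGen, Set.mem_ofPred_eq, sum_C_mul_X_pow_eq_ofFn,
    ofFn_comp_toFn_eq_id_of_natDegree_lt hfn]
  exact Ideal.mem_of_dvd _ hgf (Ideal.subset_span (by simp))

theorem minDistIs_le_card_support [DecidableEq K] {l : K} {g f : K[X]} {d : ℕ}
    (hd : minDistIs (codeOfGen n l g) d) (hf : f ≠ 0) (hfn : f.natDegree < n) (hgf : g ∣ f) :
    d ≤ f.support.card := by
  have hofFn := ofFn_comp_toFn_eq_id_of_natDegree_lt hfn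
  refine hd.2 ⟨toFn n f, toFn_mem_codeOfGen hfn hgf, fun h => hf ?_, ?_⟩
  · rw [← hofFn, h, map_zero]
  · rw [← card_support_ofFn, hofFn]

theorem natDegree_mul_ofFn_lt [DecidableEq K] {g : K[X]} (hgn : g.natDegree < n)
    (v : Fin (n - g.natDegree) → K) :
    (g * ofFn (n - g.natDegree) v).natDegree < n := by
  have hv := ofFn_natDegree_lt (by omega) v
  exact natDegree_mul_le.trans_lt (by omega)

theorem range_toFn_mul_ofFn [DecidableEq K] {l : K} {g : K[X]} (hgn : g.natDegree < n)
    (hgl : g ∣ X ^ n - C l) (hg : g ≠ 0) :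
    Set.range (fun v => toFn n (g * ofFn (n - g.natDegree) v)) = codeOfGen n l g := by
  ext c
  rw [mem_codeOfGen_iff_dvd_ofFn hgl]
  constructor
  · rintro ⟨v, rfl⟩
    rw [ofFn_comp_toFn_eq_id_of_natDegree_lt (natDegree_mul_ofFn_lt hgn v)]
    exact dvd_mul_right _ _
  · rintro ⟨q, hq⟩
    have hqn : q.natDegree < n - g.natDegree := by
      rcases eq_or_ne q 0 with rfl | hq0
      · simpa using hgn
      · have hdeg := ofFn_natDegree_lt (by omega : 1 ≤ n) c
        rw [hq, natDegree_mul hg hq0] at hdeg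
        omega
    refine ⟨toFn _ q, ?_⟩
    simp only [ofFn_comp_toFn_eq_id_of_natDegree_lt hqn, ← hq, toFn_comp_ofFn_eq_id]

theorem natCard_codeOfGen {l : K} {g : K[X]} (hgn : g.natDegree < n) (hgl : g ∣ X ^ n - C l)
    (hg : g ≠ 0) : Nat.card (codeOfGen n l g) = Nat.card K ^ (n - g.natDegree) := by
  classical
  have hinj : Function.Injective fun v => toFn n (g * ofFn (n - g.natDegree) v) := by
    intro v v' h
    have h' := congrArg (ofFn n) h
    simp only [ofFn_comp_toFn_eq_id_of_natDegree_lt (natDegree_mul_ofFn_lt hgn _)] at h'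
    exact injective_ofFn _ (mul_left_cancel₀ hg h')
  rw [← range_toFn_mul_ofFn hgn hgl hg, Nat.card_range_of_injective hinj, Nat.card_fun,
    Nat.card_fin]

theorem exists_submodule_coe_eq_codeOfGen (l : K) (g : K[X]) :
    ∃ S : Submodule K (Fin n → K), (S : Set (Fin n → K)) = codeOfGen n l g := by
  classical
  refine ⟨((Ideal.span {g, X ^ n - C l}).restrictScalars K).comap (ofFn n), ?_⟩
  ext c
  rw [codeOfGen, Set.mem_ofPred_eq, sum_C_mul_X_pow_eq_ofFn]
  rfl

theorem exists_dotProduct_eq_zero_of_symbolLocality [DecidableEq K] {S : Submodule K (Fin n → K)}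
    {i : Fin n} {r : ℕ} (h : symbolLocality (S : Set (Fin n → K)) i r) :
    ∃ w : Fin n → K, w i ≠ 0 ∧ hammingNorm w ≤ r + 1 ∧ ∀ c ∈ S, w ⬝ᵥ c = 0 := by
  obtain ⟨I, hiI, hcard, f, hf⟩ := h
  let coord (j : Fin n) : S →ₗ[K] K := LinearMap.proj j ∘ₗ S.subtype
  have hspan : coord i ∈ Submodule.span K (Set.range fun j : I => coord j) := by
    refine mem_span_of_iInf_ker_le_ker fun c hc => ?_
    simp only [Submodule.mem_iInf, LinearMap.mem_ker] at hc ⊢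
    have hzero := hf 0 S.zero_mem
    have hcoord := hf c c.2
    rw [show (fun j : I => (c : Fin n → K) j) = fun j : I => (0 : Fin n → K) j from funext hc,
      ← hzero] at hcoord
    exact hcoord
  obtain ⟨a, ha⟩ := (Submodule.mem_span_range_iff_exists_fun K).mp hspan
  refine ⟨Pi.single i 1 - ∑ j : I, a j • Pi.single (j : Fin n) 1, ?_, ?_, fun c hc => ?_⟩
  · have hne (j : I) : i ≠ j := fun h => hiI (h ▸ j.2)
    simp [hne]
  · refine (Finset.card_le_card (t := insert i I) fun k hk => ?_).trans
      ((Finset.card_insert_le _ _).trans (by omega))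
    by_contra hki
    simp only [Finset.mem_insert, not_or] at hki
    have hne (j : I) : k ≠ j := fun h => hki.2 (h ▸ j.2)
    simp [hne, hki.1] at hk
  · have hc := LinearMap.congr_fun ha ⟨c, hc⟩
    simp only [coord, LinearMap.sum_apply, LinearMap.smul_apply, LinearMap.comp_apply,
      Submodule.subtype_apply, LinearMap.proj_apply, smul_eq_mul] at hc
    simp [sub_dotProduct, sum_dotProduct, ← hc]

theorem dvd_ofFn_rev_of_dotProduct_eq_zero [DecidableEq K] (hn : 0 < n) {l : K} {g h : K[X]}
    (hg : g.Monic) (hgh : g * h = X ^ n - C l) {w : Fin n → K}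
    (hw : ∀ c ∈ codeOfGen n l g, w ⬝ᵥ c = 0) :
    h ∣ ofFn n (w ∘ Fin.rev) := by
  refine dvd_of_coeff_mul_eq_zero hg hgh (ofFn_natDegree_lt hn _) fun m hm hmn => ?_
  have hdeg : (g * X ^ (n - 1 - m)).natDegree < n := by
    rw [natDegree_mul_X_pow _ hg.ne_zero]
    omega
  have hdot := hw _ (toFn_mem_codeOfGen hdeg (dvd_mul_right _ _))
  rw [← coeff_ofFn_rev_mul_ofFn, ofFn_comp_toFn_eq_id_of_natDegree_lt hdeg, ← mul_assoc] at hdot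
  rwa [← coeff_mul_X_pow _ (n - 1 - m), show m + (n - 1 - m) = n - 1 by omega]

end ConstacyclicCodes

section RepeatedRootCodes

theorem X_pow_sub_C_pow_char_pow {R : Type*} [CommRing R] {p : ℕ} [Fact p.Prime] [CharP R p]
    (η s : ℕ) (μ : R) : (X ^ η - C μ) ^ p ^ s = X ^ (η * p ^ s) - C (μ ^ p ^ s) := by
  rw [sub_pow_char_pow, ← pow_mul, C_pow]

theorem card_support_contract_le {R : Type*} [CommSemiring R] {η : ℕ} (hη : η ≠ 0) (f : R[X]) :
    (contract η f).support.card ≤ f.support.card := by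
  refine Finset.card_le_card_of_injOn (· * η) (fun k hk => ?_)
    (mul_left_injective₀ hη).injOn
  simpa [coeff_contract hη] using hk

theorem natDegree_contract_lt {R : Type*} [CommSemiring R] {η N : ℕ} {f : R[X]}
    (hf : f.natDegree < η * N) : (contract η f).natDegree < N := by
  have hη : η ≠ 0 := by rintro rfl; simp at hf
  have hN : 0 < N := Nat.pos_of_ne_zero (by rintro rfl; simp at hf)
  rcases eq_or_ne (contract η f) 0 with hzero | hne
  · rwa [hzero, natDegree_zero]
  · have hcoeff := leadingCoeff_ne_zero.mpr hne
    rw [leadingCoeff, coeff_contract hη] at hcoeff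
    have hle := (le_natDegree_of_ne_zero hcoeff).trans_lt hf
    exact Nat.lt_of_mul_lt_mul_left (by rwa [mul_comm] at hle)

theorem pow_dvd_contract_of_pow_dvd {R : Type*} [CommRing R] {η : ℕ} (hη : η ≠ 0) {μ : R} {e : ℕ}
    {f : R[X]} (hf : (X ^ η - C μ) ^ e ∣ f) : (X - C μ) ^ e ∣ contract η f := by
  obtain ⟨q, rfl⟩ := hf
  have hexpand : (X ^ η - C μ) ^ e = expand R η ((X - C μ) ^ e) := by simp
  rw [hexpand, mul_comm, contract_mul_expand hη]
  exact dvd_mul_left _ _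

variable {K : Type} [Field K] {p η s i : ℕ} [Fact p.Prime] [CharP K p] {μ : K}

theorem minDistIs_Ci_le_two [DecidableEq K] (hη : 0 < η) {t d : ℕ} (hts : t < s) (hi : i ≤ p ^ t)
    (hd : minDistIs (Ci p η s i μ) d) : d ≤ 2 := by
  have hp : p.Prime := Fact.out
  set f : K[X] := X ^ (η * p ^ t) - C (μ ^ p ^ t) with hf
  have hpos : 0 < η * p ^ t := Nat.mul_pos hη (pow_pos hp.pos t)
  have hdvd : (X ^ η - C μ) ^ i ∣ f := by
    rw [hf, ← X_pow_sub_C_pow_char_pow]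
    exact pow_dvd_pow _ hi
  have hdeg : f.natDegree < η * p ^ s := by
    rw [hf, natDegree_X_pow_sub_C]
    exact Nat.mul_lt_mul_of_pos_left (Nat.pow_lt_pow_right hp.one_lt hts) hη
  have hsupp : f.support ⊆ {η * p ^ t, 0} := by
    simpa [hf, sub_eq_add_neg] using
      support_binomial_subset (η * p ^ t) 0 (1 : K) (-μ ^ p ^ t)
  exact (minDistIs_le_card_support hd (X_pow_sub_C_ne_zero hpos _) hdeg hdvd).trans
    ((Finset.card_le_card hsupp).trans Finset.card_le_two)

theorem natCard_Ci (hη : 0 < η) (hi : i < p ^ s) :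
    Nat.card (Ci p η s i μ) = Nat.card K ^ (η * p ^ s - η * i) := by
  have hmonic : ((X ^ η - C μ) ^ i : K[X]).Monic := (monic_X_pow_sub_C μ hη.ne').pow i
  have hdeg : ((X ^ η - C μ) ^ i : K[X]).natDegree = η * i := by
    rw [natDegree_pow, natDegree_X_pow_sub_C, mul_comm]
  rw [Ci, natCard_codeOfGen _ _ hmonic.ne_zero, hdeg]
  · rw [hdeg]
    exact Nat.mul_lt_mul_of_pos_left hi hη
  · rw [← X_pow_sub_C_pow_char_pow]
    exact pow_dvd_pow _ hi.le

theorem exists_pow_dvd_of_hasAllSymbolLocality_Ci (hη : 0 < η) (hi : i ≤ p ^ s) {r : ℕ}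
    (hr : hasAllSymbolLocality (Ci p η s i μ) r) :
    ∃ f : K[X], f.coeff 0 ≠ 0 ∧ f.natDegree < η * p ^ s ∧ f.support.card ≤ r + 1 ∧
      (X ^ η - C μ) ^ (p ^ s - i) ∣ f := by
  classical
  have hp : p.Prime := Fact.out
  have hn : 0 < η * p ^ s := Nat.mul_pos hη (pow_pos hp.pos s)
  have hloc := hr ⟨η * p ^ s - 1, by omega⟩
  obtain ⟨S, hS⟩ := exists_submodule_coe_eq_codeOfGen (n := η * p ^ s) (μ ^ p ^ s)
    ((X ^ η - C μ) ^ i)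
  rw [Ci, ← hS] at hloc
  obtain ⟨w, hw_last, hw_weight, hw_dual⟩ := exists_dotProduct_eq_zero_of_symbolLocality hloc
  refine ⟨ofFn (η * p ^ s) (w ∘ Fin.rev), ?_, ofFn_natDegree_lt hn _, ?_, ?_⟩
  · rw [ofFn_coeff_eq_val_of_lt _ hn]
    exact hw_last
  · rw [card_support_ofFn, hammingNorm_comp_rev]
    exact hw_weight
  · refine dvd_ofFn_rev_of_dotProduct_eq_zero (l := μ ^ p ^ s) hn
      ((monic_X_pow_sub_C μ hη.ne').pow i) ?_ ?_
    · rw [← pow_add, Nat.add_sub_cancel' hi, X_pow_sub_C_pow_char_pow]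
    · rw [← hS]
      exact hw_dual

theorem exists_Vdig_le_of_hasAllSymbolLocality_Ci (hη : 0 < η) (hμ : μ ≠ 0) (hi : i ≤ p ^ s)
    {r : ℕ} (hr : hasAllSymbolLocality (Ci p η s i μ) r) :
    ∃ t, p ^ s - i ≤ t ∧ t < p ^ s ∧ Vdig p t ≤ r + 1 := by
  classical
  obtain ⟨f, hf_zero, hf_deg, hf_card, hf_dvd⟩ := exists_pow_dvd_of_hasAllSymbolLocality_Ci hη hi hr
  have hne : contract η f ≠ 0 := by
    intro h
    apply hf_zero
    rw [← zero_mul η, ← coeff_contract hη.ne', h, coeff_zero]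
  refine ⟨(contract η f).rootMultiplicity μ,
    (le_rootMultiplicity_iff hne).mpr (pow_dvd_contract_of_pow_dvd hη.ne' hf_dvd), ?_, ?_⟩
  · rw [← count_roots]
    exact ((Multiset.count_le_card _ _).trans (card_roots' _)).trans_lt
      (natDegree_contract_lt hf_deg)
  · calc Vdig p ((contract η f).rootMultiplicity μ)
      _ ≤ (contract η f).support.card := Vdig_rootMultiplicity_le_card_support Fact.out hne hμ
      _ ≤ f.support.card := card_support_contract_le hη.ne' f
      _ ≤ r + 1 := hf_card

theorem exists_locality_mul_lt_of_optimalLRC_Ci [Fintype K] [DecidableEq K] (hη : 0 < η)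
    (hi : 1 ≤ i) {t : ℕ} (hts : t < s) (hit : i ≤ p ^ t) (hopt : optimalLRC (Ci p η s i μ)) :
    ∃ r, hasAllSymbolLocality (Ci p η s i μ) r ∧ η * i * (r + 1) < η * p ^ s + (r + 1) := by
  obtain ⟨k, d, r, hk, hd, hr, hopt⟩ := hopt
  have hi_lt : i < p ^ s := hit.trans_lt (Nat.pow_lt_pow_right (Fact.out : p.Prime).one_lt hts)
  rw [natCard_Ci hη hi_lt, Nat.card_eq_fintype_card] at hk
  have hk := Nat.pow_right_injective Fintype.one_lt_card hk
  have hd_le := minDistIs_Ci_le_two hη hts hit hd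
  have hle : η * i ≤ η * p ^ s := Nat.mul_le_mul_left η hi_lt.le
  have hi_pos : 0 < η * i := Nat.mul_pos hη hi
  have hceil : η * i ≤ (k + r - 1) / r := by
    rw [nceil] at hopt
    omega
  refine ⟨r, hr.1, ?_⟩
  have hr_pos : 0 < r := by
    by_contra! hr_zero
    rw [Nat.le_zero.mp hr_zero, Nat.div_zero] at hceil
    omega
  have hmul_le := (Nat.le_div_iff_mul_le hr_pos).mp hceil
  rw [mul_add]
  omega

end RepeatedRootCodes

section Arithmetic

/-- With `a + c = p`, `N = p ^ e` and `P = p ^ w`, the number `a * N + b` has leading digit `a` in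
base `p`. -/
theorem digits_of_mul_lt {η a b c N P : ℕ} (hη : 0 < η) (ha : 1 ≤ a) (hc : 1 ≤ c) (hN : 0 < N)
    (h : η * (a * N + b) * ((c + 1) * P) < η * ((a + c) * N * P) + (c + 1) * P) :
    b = 0 ∧ (a = 1 ∨ a = 2 ∧ η = 1 ∧ N = 1) := by
  obtain ⟨a, rfl⟩ := Nat.exists_eq_add_of_le' ha
  have hlt : η * N * (a * c) + η * b * (c + 1) < c + 1 :=
    Nat.lt_of_mul_lt_mul_right (a := P) (by nlinarith)
  have hηN : 0 < η * N := Nat.mul_pos hη hN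
  obtain rfl : b = 0 := by
    by_contra hb
    have := Nat.mul_le_mul_right (c + 1) (Nat.mul_pos hη (Nat.pos_of_ne_zero hb))
    omega
  refine ⟨rfl, ?_⟩
  have hle : η * N * a ≤ 1 := by
    by_contra! hgt
    nlinarith
  rcases a.eq_zero_or_pos with rfl | ha_pos
  · exact Or.inl rfl
  · obtain ⟨hηN1, ha1⟩ := mul_eq_one.mp (hle.antisymm (Nat.mul_pos hηN ha_pos))
    obtain ⟨hη1, hN1⟩ := mul_eq_one.mp hηN1
    exact Or.inr ⟨by omega, hη1, hN1⟩

theorem digits_of_mul_Vdig_lt {p η a b e w t : ℕ} (hη : 0 < η) (ha : 1 ≤ a) (hap : a < p)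
    (hb : b < p ^ e) (ht : t < p ^ (w + 1 + e)) (hat : p ^ (w + 1 + e) ≤ t + (a * p ^ e + b))
    (h : η * (a * p ^ e + b) * Vdig p t < η * p ^ (w + 1 + e) + Vdig p t) :
    b = 0 ∧ (a = 1 ∨ a = 2 ∧ η = 1 ∧ p ^ e = 1) := by
  have hpe : 0 < p ^ e := by omega
  have hV : (p - a + 1) * p ^ w ≤ Vdig p t :=
    mul_pow_le_Vdig (by omega) hap ht (hat.trans_lt (by rw [add_one_mul]; omega))
  obtain ⟨c, rfl⟩ := Nat.exists_eq_add_of_le hap.le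
  rw [Nat.add_sub_cancel_left] at hV
  have hpos : 1 ≤ η * (a * (a + c) ^ e + b) := Nat.mul_pos hη (by positivity)
  refine digits_of_mul_lt (c := c) (P := (a + c) ^ w) hη ha (by omega) hpe ?_
  rw [show (a + c) ^ (w + 1 + e) = (a + c) * (a + c) ^ e * (a + c) ^ w by ring] at h
  nlinarith

theorem eq_pow_or_eq_two_of_mul_Vdig_lt {p η s i t : ℕ} (hp : 1 < p) (hη : 0 < η) (hi : 1 ≤ i)
    (his : i < p ^ (s - 1)) (hit : p ^ s - i ≤ t) (hts : t < p ^ s)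
    (h : η * i * Vdig p t < η * p ^ s + Vdig p t) :
    (∃ k, 1 ≤ k ∧ k ≤ s - 1 ∧ i = p ^ (s - k - 1)) ∨ i = 2 ∧ η = 1 ∧ p ≠ 2 := by
  obtain ⟨e, he⟩ : ∃ e, e = Nat.log p i := ⟨_, rfl⟩
  have hpe : 0 < p ^ e := by positivity
  have ha : 1 ≤ i / p ^ e := Nat.div_pos (he ▸ Nat.pow_log_le_self p (by omega)) hpe
  have hap : i / p ^ e < p :=
    Nat.div_lt_of_lt_mul (pow_succ p e ▸ he ▸ Nat.lt_pow_succ_log_self hp i)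
  have hes : e < s - 1 := he ▸ Nat.log_lt_of_lt_pow (by omega) his
  have hdigits : i / p ^ e * p ^ e + i % p ^ e = i := Nat.div_add_mod' i (p ^ e)
  have hs : s = s - 1 - e + 1 + e := by omega
  obtain ⟨hb, hdigit⟩ := digits_of_mul_Vdig_lt (w := s - 1 - e) hη ha hap (Nat.mod_lt i hpe)
    (hs ▸ hts) (by rw [hdigits, ← hs]; omega) (by rwa [hdigits, ← hs])
  rw [hb, add_zero] at hdigits
  rcases hdigit with ha1 | ⟨ha2, hη1, hpe1⟩
  · refine Or.inl ⟨s - 1 - e, by omega, by omega, ?_⟩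
    rw [show s - (s - 1 - e) - 1 = e by omega, ← hdigits, ha1, one_mul]
  · refine Or.inr ⟨?_, hη1, by omega⟩
    rw [← hdigits, ha2, hpe1]

end Arithmetic

theorem stmt17_general {p : ℕ} {F : Type} [Field F] [Fintype F] [DecidableEq F]
    [CharP F p] {s η i : ℕ} (hη : 0 < η) {lam0 : F} (hlam0 : lam0 ≠ 0) (hi1 : 1 ≤ i)
    (hi2 : i < p ^ (s - 1)) (hopt : optimalLRC (Ci p η s i lam0)) :
    (∃ k : ℕ, 1 ≤ k ∧ k ≤ s - 1 ∧ i = p ^ (s - k - 1)) ∨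
    (i = 2 ∧ η = 1 ∧ p ≠ 2) := by
  have hp : p.Prime := CharP.char_is_prime F p
  have : Fact p.Prime := ⟨hp⟩
  have hs : s - 1 < s := by
    by_contra! h
    rw [show s - 1 = 0 by omega, pow_zero] at hi2
    omega
  have his : i < p ^ s := hi2.trans (Nat.pow_lt_pow_right hp.one_lt hs)
  obtain ⟨r, hr, hsingleton⟩ := exists_locality_mul_lt_of_optimalLRC_Ci hη hi1 hs hi2.le hopt
  obtain ⟨t, hit, hts, hV⟩ := exists_Vdig_le_of_hasAllSymbolLocality_Ci hη hlam0 his.le hr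
  have hpos : 1 ≤ η * i := Nat.mul_pos hη hi1
  exact eq_pow_or_eq_two_of_mul_Vdig_lt hp.one_lt hη hi1 hi2 hit hts (by nlinarith)

/-- Suppose `x^η − λ₀` is irreducible over `F_{p^m}`, `s ≥ 2` and
`1 ≤ i ≤ p^{s−1} − 1`. If `C_i(η, p^s, λ₀)` is an optimal LRC, then `i = p^{s−k−1}` for some
`1 ≤ k ≤ s − 1`, or else `i = 2`, `η = 1` and `p` is odd. -/
theorem stmt17 {p m : ℕ} (hp : p.Prime) (hm : 1 ≤ m)
    {F : Type} [Field F] [Fintype F] [DecidableEq F] (hcard : Fintype.card F = p ^ m)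
    (s : ℕ) (hs : 2 ≤ s) (η : ℕ) (hη : 0 < η) (hcop : Nat.Coprime η p)
    (lam0 : F) (hlam0 : lam0 ≠ 0) (hirr : Irreducible (X ^ η - Polynomial.C lam0))
    (i : ℕ) (hi1 : 1 ≤ i) (hi2 : i ≤ p ^ (s - 1) - 1)
    (hopt : optimalLRC (Ci p η s i lam0)) :
    (∃ k : ℕ, 1 ≤ k ∧ k ≤ s - 1 ∧ i = p ^ (s - k - 1)) ∨
    (i = 2 ∧ η = 1 ∧ p ≠ 2) := by
  have : Fact p.Prime := ⟨hp⟩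
  have := charP_of_card_eq_prime_pow hcard
  exact stmt17_general hη hlam0 hi1 (by omega) hopt
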